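/- Fix an integer r ≥ 1 and let n_4 = 5r − 3 (which equals R_4(rK_2)). Then 7r − 6 ≤ R̃_4(rK_2; n_4) ≤ 7r − 5. Equivalently: (1) Builder has a strategy that, playing on K_{5r−3} with 4 colors, guarantees within 7r − 5 moves that some color class contains r pairwise disjoint edges, against every Painter strategy; and (2) Painter has a strategy such that for every way Builder adaptively selects 7r − 7 distinct edges of K_{5r−3}, after these moves no color class contains r pairwise disjoint edges. -/

import Mathlib

open Finset

/-- Two edges of a complete graph (elements of `Sym2 (Fin n)`) are disjoint if they
share no vertex. -/
def EdgeDisjoint {n : ℕ} (e f : Sym2 (Fin n)) : Prop := ∀ v, v ∈ e → v ∉ f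

/-- A finite set of elements of `Sym2 (Fin n)` is a matching if each element is a genuine
(non-loop) edge and the edges are pairwise disjoint. -/
def IsMatchingIn {n : ℕ} (M : Finset (Sym2 (Fin n))) : Prop :=
  (∀ e ∈ M, ¬ e.IsDiag) ∧ (M : Set (Sym2 (Fin n))).Pairwise EdgeDisjoint

/-- A history of the online Ramsey game on `K_n` with `t` colours: the list of
edges played so far, each together with the colour Painter gave it. -/
abbrev GameHistory (n t : ℕ) := List (Sym2 (Fin n) × Fin t)

/-- A Builder strategy: given the history so far, select the next edge. -/
abbrev BuilderStrategy (n t : ℕ) := GameHistory n t → Sym2 (Fin n)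

/-- A Painter strategy: given the history so far and the newly selected edge,
choose a colour for it. -/
abbrev PainterStrategy (n t : ℕ) := GameHistory n t → Sym2 (Fin n) → Fin t

/-- The history after `k` moves when Builder plays strategy `B` against Painter
strategy `P`. -/
def gamePlay {n t : ℕ} (B : BuilderStrategy n t) (P : PainterStrategy n t) :
    ℕ → GameHistory n t
  | 0 => []
  | k + 1 =>
      let h := gamePlay B P k
      h ++ [(B h, P h (B h))]

/-- Builder plays legally for the first `k` moves against `P`: every selected edge
is a genuine (non-loop) edge not selected before. -/
def BuilderValid {n t : ℕ} (B : BuilderStrategy n t) (P : PainterStrategy n t)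
    (k : ℕ) : Prop :=
  ∀ j < k, ¬ (B (gamePlay B P j)).IsDiag ∧
    B (gamePlay B P j) ∉ (gamePlay B P j).map Prod.fst

/-- The history `h` contains, for some colour `i`, a matching of `r i` edges all
coloured `i`. -/
def HistoryHasMatching (n t : ℕ) (r : Fin t → ℕ) (h : GameHistory n t) : Prop :=
  ∃ i : Fin t, ∃ M : Finset (Sym2 (Fin n)),
    M.card = r i ∧ IsMatchingIn M ∧ ∀ e ∈ M, (e, i) ∈ h

/-- Builder can force, within `k` legal moves on `K_n` with `t` colours, some colour
`i` to contain a matching of `r i` edges, against every Painter strategy. -/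
def BuilderWinsIn (n t : ℕ) (r : Fin t → ℕ) (k : ℕ) : Prop :=
  ∃ B : BuilderStrategy n t, (∀ P : PainterStrategy n t, BuilderValid B P k) ∧
    ∀ P : PainterStrategy n t, HistoryHasMatching n t r (gamePlay B P k)

/-- The restricted online Ramsey number `R̃(r₁K₂,…,r_tK₂; n)`: the least `k` such
that Builder can force a win within `k` moves. -/
noncomputable def restrictedOnlineRamsey (n t : ℕ) (r : Fin t → ℕ) : ℕ :=
  sInf {k | BuilderWinsIn n t r k}

/-- A colouring `c` of (the edges of) `K_N` with `t` colours contains, for some colour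
`i`, a matching of `r i` edges all coloured `i`. -/
def ColoringHasMatching (N t : ℕ) (r : Fin t → ℕ) (c : Sym2 (Fin N) → Fin t) : Prop :=
  ∃ i : Fin t, ∃ M : Finset (Sym2 (Fin N)),
    M.card = r i ∧ IsMatchingIn M ∧ ∀ e ∈ M, c e = i

/-- The classical Ramsey number `R(r₁K₂,…,r_tK₂)`: the least `N` such that every
`t`-colouring of the edges of `K_N` contains, for some `i`, a matching of `r i`
edges in colour `i`. -/
noncomputable def matchingRamsey (t : ℕ) (r : Fin t → ℕ) : ℕ :=
  sInf {N | ∀ c : Sym2 (Fin N) → Fin t, ColoringHasMatching N t r c}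

/-!
Painter reserves `s i` slots for every colour `i` but the last one. An edge avoiding all filled
slots fills a free slot with its two endpoints; a later edge that meets a filled slot is given the
slot's colour, and the slot shrinks to the vertices it shares with that edge. Every edge of colour
`i` then contains a filled slot of colour `i`, so disjoint edges need different slots. Only when all
slots are full does Painter use the last colour, on edges that avoid all slots; the few remaining
vertices leave room for a large matching only if many slots have shrunk, and each shrinking has cost
Builder a move.

Builder grows vertex-disjoint gadgets: single edges, two-coloured paths on three vertices
(cherries), and five-vertex sets carrying all four colours. An edge between two gadgets merges them
at the price of one vertex, so a gadget with `m` colours has `m + 1` vertices and costs `2 * m - 1`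
moves. Builder merges single edges into cherries as long as the colour pairs of the cherries keep
forming a star; a cherry that breaks the star is disjoint in colours from another cherry, and the
two are merged into a five-vertex gadget. When no merge is possible and the vertices are exhausted,
a weighting of the colours shows that some colour occurs in `s + 1` gadgets.
-/

theorem edgeDisjoint_iff_disjoint_toFinset {n : ℕ} {e f : Sym2 (Fin n)} :
    EdgeDisjoint e f ↔ Disjoint e.toFinset f.toFinset := by
  simp only [EdgeDisjoint, Finset.disjoint_left, Sym2.mem_toFinset]

theorem HistoryHasMatching.mono {n t : ℕ} {r : Fin t → ℕ} {h h' : GameHistory n t}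
    (hh : HistoryHasMatching n t r h) (hsub : h ⊆ h') : HistoryHasMatching n t r h' := by
  obtain ⟨i, M, hcard, hM, hmem⟩ := hh
  exact ⟨i, M, hcard, hM, fun e he => hsub (hmem e he)⟩

theorem length_gamePlay {n t : ℕ} (B : BuilderStrategy n t) (P : PainterStrategy n t) (k : ℕ) :
    (gamePlay B P k).length = k := by
  induction k with
  | zero => rfl
  | succ k ih => simp [gamePlay, ih]

namespace IsMatchingIn

variable {n : ℕ} {M : Finset (Sym2 (Fin n))}

theorem pairwiseDisjoint_toFinset (hM : IsMatchingIn M) :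
    (M : Set (Sym2 (Fin n))).PairwiseDisjoint Sym2.toFinset :=
  fun _ he _ hf hef => edgeDisjoint_iff_disjoint_toFinset.1 (hM.2 he hf hef)

theorem card_biUnion_toFinset (hM : IsMatchingIn M) :
    #(M.biUnion Sym2.toFinset) = 2 * #M := by
  rw [card_biUnion hM.pairwiseDisjoint_toFinset,
    sum_congr rfl fun e he => Sym2.card_toFinset_of_not_isDiag e (hM.1 e he),
    sum_const, smul_eq_mul, mul_comm]

theorem card_le_of_forall_exists_subset {ι : Type*} [Fintype ι] (hM : IsMatchingIn M)
    (B : ι → Finset (Fin n)) (hB : ∀ e ∈ M, ∃ j, (B j).Nonempty ∧ B j ⊆ e.toFinset) :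
    #M ≤ Fintype.card ι := by
  refine card_le_card_of_forall_subsingleton (fun e j => (B j).Nonempty ∧ B j ⊆ e.toFinset)
    (fun e he => by simpa using hB e he) ?_
  rintro j - e ⟨he, ⟨v, hv⟩, hje⟩ f ⟨hf, -, hjf⟩
  by_contra hef
  exact disjoint_left.1 (hM.pairwiseDisjoint_toFinset he hf hef) (hje hv) (hjf hv)

end IsMatchingIn

/-! ### Painter's strategy -/

theorem BuilderWinsIn.exists_history {n t k : ℕ} [NeZero t] {r : Fin t → ℕ}
    {Inv : GameHistory n t → Prop} (hB : BuilderWinsIn n t r k) (nil : Inv [])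
    (step : ∀ h e, Inv h → ¬ e.IsDiag → ∃ c, Inv (h ++ [(e, c)])) :
    ∃ h, h.length = k ∧ Inv h ∧ HistoryHasMatching n t r h := by
  obtain ⟨B, hlegal, hwin⟩ := hB
  choose! P hP using step
  have inv : ∀ j ≤ k, Inv (gamePlay B P j) := by
    intro j
    induction j with
    | zero => exact fun _ => nil
    | succ j ih => exact fun hj => hP _ _ (ih (by omega)) (hlegal P j hj).1
  exact ⟨gamePlay B P k, length_gamePlay B P k, inv k le_rfl, hwin P⟩

section Painter

variable {n t : ℕ} {s : Fin (t + 1) → ℕ}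

/-- Painter's slots: `s i` of them for every colour `i` except the last one. -/
abbrev Slot (s : Fin (t + 1) → ℕ) : Type := Σ i : Fin t, Fin (s i.castSucc)

/-- The number of moves Builder has at least spent on the vertex set stored in a slot: none on an
empty slot, one on a slot holding a whole edge, two on a slot that has shrunk to a vertex. -/
def slotCost (b : Finset (Fin n)) : ℕ := if b = ∅ then 0 else 3 - #b

theorem slotCost_le_slotCost_add_one {b b' : Finset (Fin n)} (hb : b.Nonempty) (hbb' : b ⊆ b')
    (hb' : #b' ≤ 2) : slotCost b ≤ slotCost b' + 1 := by
  have := hb.card_pos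
  simp only [slotCost, if_neg hb.ne_empty, if_neg (hb.mono hbb').ne_empty]
  omega

theorem sum_slotCost_update_le {B : Slot s → Finset (Fin n)} {x : Slot s} {b : Finset (Fin n)}
    (hb : slotCost b ≤ slotCost (B x) + 1) :
    ∑ y, slotCost (Function.update B x b y) ≤ ∑ y, slotCost (B y) + 1 := by
  have hrest : ∑ y ∈ univ.erase x, slotCost (Function.update B x b y) =
      ∑ y ∈ univ.erase x, slotCost (B y) :=
    sum_congr rfl fun y hy => by rw [Function.update_of_ne (ne_of_mem_erase hy)]
  rw [← add_sum_erase univ _ (mem_univ x), ← add_sum_erase univ _ (mem_univ x), hrest,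
    Function.update_self]
  omega

/-- Painter's invariant: after the history `h`, the slots hold the vertex sets `B`, an empty set
standing for an unused slot. -/
structure PainterInvariant (s : Fin (t + 1) → ℕ) (h : GameHistory n (t + 1))
    (B : Slot s → Finset (Fin n)) : Prop where
  disjoint : Pairwise (Function.onFun Disjoint B)
  card_le_two : ∀ x, #(B x) ≤ 2
  exists_subset : ∀ e (i : Fin t), (e, i.castSucc) ∈ h →
    ∃ j, (B ⟨i, j⟩).Nonempty ∧ B ⟨i, j⟩ ⊆ e.toFinset
  nonempty_of_last : ∀ e, (e, Fin.last t) ∈ h → ∀ x, (B x).Nonempty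
  disjoint_of_last : ∀ e, (e, Fin.last t) ∈ h → ∀ x, Disjoint e.toFinset (B x)
  cost_le : ∑ x, slotCost (B x) + h.countP (fun p => p.2 = Fin.last t) ≤ h.length

namespace PainterInvariant

variable {h : GameHistory n (t + 1)} {B : Slot s → Finset (Fin n)}

theorem nil : PainterInvariant (n := n) s [] (fun _ => ∅) where
  disjoint _ _ _ := disjoint_empty_left _
  card_le_two := by simp
  exists_subset := by simp
  nonempty_of_last := by simp
  disjoint_of_last := by simp
  cost_le := by simp [slotCost]

theorem update (H : PainterInvariant s h B) {e : Sym2 (Fin n)} {x : Slot s} {b : Finset (Fin n)}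
    (hb : b.Nonempty) (hbe : b ⊆ e.toFinset) (hcard : #b ≤ 2)
    (hdisj : ∀ y ≠ x, Disjoint b (B y)) (hsub : (B x).Nonempty → b ⊆ B x)
    (hcost : slotCost b ≤ slotCost (B x) + 1) :
    PainterInvariant s (h ++ [(e, x.1.castSucc)]) (Function.update B x b) where
  disjoint y z hyz := by
    rcases eq_or_ne y x with rfl | hy
    · simpa [Function.onFun, hyz.symm] using hdisj z hyz.symm
    rcases eq_or_ne z x with rfl | hz
    · simpa [Function.onFun, hyz] using (hdisj y hyz).symm
    · simpa [Function.onFun, hy, hz] using H.disjoint hyz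
  card_le_two y := by
    rcases eq_or_ne y x with rfl | hy
    · simpa using hcard
    · simpa [hy] using H.card_le_two y
  exists_subset f i hf := by
    rcases List.mem_append.1 hf with hf | hf
    · obtain ⟨j, hj, hjf⟩ := H.exists_subset f i hf
      refine ⟨j, ?_⟩
      rcases eq_or_ne ⟨i, j⟩ x with rfl | hy
      · simpa using ⟨hb, (hsub hj).trans hjf⟩
      · simpa [hy] using ⟨hj, hjf⟩
    · obtain ⟨rfl, hi⟩ : f = e ∧ i = x.1 := by simpa using hf
      subst hi
      exact ⟨x.2, by simpa using ⟨hb, hbe⟩⟩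
  nonempty_of_last f hf y := by
    replace hf : (f, Fin.last t) ∈ h := by simpa [(Fin.castSucc_ne_last _).symm] using hf
    rcases eq_or_ne y x with rfl | hy
    · simpa using hb
    · simpa [hy] using H.nonempty_of_last f hf y
  disjoint_of_last f hf y := by
    replace hf : (f, Fin.last t) ∈ h := by simpa [(Fin.castSucc_ne_last _).symm] using hf
    rcases eq_or_ne y x with rfl | hy
    · simpa using (H.disjoint_of_last f hf y).mono_right (hsub (H.nonempty_of_last f hf y))
    · simpa [hy] using H.disjoint_of_last f hf y
  cost_le := by
    have := H.cost_le
    have := sum_slotCost_update_le hcost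
    simp only [List.countP_append, List.countP_singleton, Fin.castSucc_ne_last, decide_false,
      Bool.false_eq_true, if_false, List.length_append, List.length_singleton]
    omega

theorem last (H : PainterInvariant s h B) {e : Sym2 (Fin n)} (hfull : ∀ x, (B x).Nonempty)
    (hdisj : ∀ x, Disjoint e.toFinset (B x)) :
    PainterInvariant s (h ++ [(e, Fin.last t)]) B where
  disjoint := H.disjoint
  card_le_two := H.card_le_two
  exists_subset f i hf := H.exists_subset f i <| by simpa [Fin.castSucc_ne_last] using hf
  nonempty_of_last _ _ := hfull
  disjoint_of_last f hf := by
    rcases List.mem_append.1 hf with hf | hf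
    · exact H.disjoint_of_last f hf
    · obtain rfl : f = e := by simpa using hf
      exact hdisj
  cost_le := by
    have := H.cost_le
    simp only [List.countP_append, List.countP_singleton, decide_true, if_true, List.length_append,
      List.length_singleton]
    omega

theorem exists_colour (H : PainterInvariant s h B) {e : Sym2 (Fin n)} (he : ¬ e.IsDiag) :
    ∃ c B', PainterInvariant s (h ++ [(e, c)]) B' := by
  by_cases hmeet : ∃ x, ¬ Disjoint e.toFinset (B x)
  · obtain ⟨x, hx⟩ := hmeet
    have hne : (B x ∩ e.toFinset).Nonempty := by
      rwa [disjoint_comm, not_disjoint_iff_nonempty_inter] at hx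
    exact ⟨_, _, H.update hne inter_subset_right
      ((card_le_card inter_subset_left).trans (H.card_le_two x))
      (fun y hy => (H.disjoint hy.symm).mono_left inter_subset_left) (fun _ => inter_subset_left)
      (slotCost_le_slotCost_add_one hne inter_subset_left (H.card_le_two x))⟩
  push Not at hmeet
  by_cases hfull : ∀ x, (B x).Nonempty
  · exact ⟨_, B, H.last hfull hmeet⟩
  · push Not at hfull
    obtain ⟨x, hx⟩ := hfull
    have hcard : #e.toFinset = 2 := Sym2.card_toFinset_of_not_isDiag e he
    have hne : e.toFinset.Nonempty := card_pos.1 (by omega)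
    exact ⟨_, _, H.update hne subset_rfl hcard.le (fun y _ => hmeet y)
      (fun hx' => absurd hx hx'.ne_empty)
      (by simp [slotCost, hne.ne_empty, hcard])⟩

theorem card_le_of_castSucc (H : PainterInvariant s h B) {M : Finset (Sym2 (Fin n))}
    (hM : IsMatchingIn M) {i : Fin t} (hMh : ∀ e ∈ M, (e, i.castSucc) ∈ h) :
    #M ≤ s i.castSucc := by
  simpa using hM.card_le_of_forall_exists_subset (fun j => B ⟨i, j⟩)
    fun e he => H.exists_subset e i (hMh e he)

theorem three_mul_le_of_last (H : PainterInvariant s h B) {M : Finset (Sym2 (Fin n))}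
    (hM : IsMatchingIn M) (hne : M.Nonempty) (hMh : ∀ e ∈ M, (e, Fin.last t) ∈ h) :
    3 * (∑ i : Fin t, s i.castSucc + #M) ≤ n + h.length := by
  obtain ⟨e₀, he₀⟩ := hne
  have hslots : 3 * ∑ i : Fin t, s i.castSucc ≤ ∑ x, slotCost (B x) + ∑ x, #(B x) := by
    calc 3 * ∑ i : Fin t, s i.castSucc = ∑ _x : Slot s, 3 := by simp [mul_comm]
      _ ≤ ∑ x, (slotCost (B x) + #(B x)) := sum_le_sum fun x _ => by
        simp only [slotCost, if_neg (H.nonempty_of_last e₀ (hMh e₀ he₀) x).ne_empty]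
        omega
      _ = _ := sum_add_distrib
  have hverts : 2 * #M + ∑ x, #(B x) ≤ n := by
    have hdisj : Disjoint (M.biUnion Sym2.toFinset) (univ.biUnion B) := by
      simp only [disjoint_biUnion_left, disjoint_biUnion_right]
      exact fun x _ e he => H.disjoint_of_last e (hMh e he) x
    rw [← hM.card_biUnion_toFinset, ← card_biUnion fun x _ y _ hxy => H.disjoint hxy,
      ← card_union_of_disjoint hdisj]
    simpa using card_le_univ (M.biUnion Sym2.toFinset ∪ univ.biUnion B)
  have hlast : #M ≤ h.countP (fun p => p.2 = Fin.last t) := by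
    rw [← card_map (Function.Embedding.sectL (Sym2 (Fin n)) (Fin.last t)),
      List.countP_eq_length_filter]
    refine (card_le_card fun p hp => ?_).trans (List.toFinset_card_le _)
    obtain ⟨e, he, rfl⟩ := mem_map.1 hp
    simp [hMh e he]
  have := H.cost_le
  omega

theorem three_mul_sum_add_one_le (H : PainterInvariant s h B)
    (hh : HistoryHasMatching n (t + 1) (fun i => s i + 1) h) :
    3 * (∑ i, s i + 1) ≤ n + h.length := by
  obtain ⟨i, M, hcard, hM, hMh⟩ := hh
  replace hcard : #M = s i + 1 := hcard
  induction i using Fin.lastCases with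
  | cast i =>
    have := H.card_le_of_castSucc hM hMh
    omega
  | last =>
    have := H.three_mul_le_of_last hM (card_pos.1 (by omega)) hMh
    rwa [hcard, ← add_assoc, ← Fin.sum_univ_castSucc] at this

end PainterInvariant

theorem BuilderWinsIn.three_mul_sum_add_one_le {k : ℕ}
    (hB : BuilderWinsIn n (t + 1) (fun i => s i + 1) k) : 3 * (∑ i, s i + 1) ≤ n + k := by
  obtain ⟨h, rfl, ⟨B, H⟩, hh⟩ := hB.exists_history (Inv := fun h => ∃ B, PainterInvariant s h B)
    ⟨_, .nil⟩ (fun _ _ ⟨_, H⟩ he => H.exists_colour he)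
  exact H.three_mul_sum_add_one_le hh

end Painter

/-! ### Forced wins -/

section Forces

variable {n t : ℕ} {r : Fin t → ℕ}

/-- The edges of `K_n` that Builder may still select after the history `h`. -/
def freeEdges (h : GameHistory n t) : Finset (Sym2 (Fin n)) :=
  univ.filter fun e => ¬ e.IsDiag ∧ e ∉ h.map Prod.fst

theorem mem_freeEdges {h : GameHistory n t} {e : Sym2 (Fin n)} :
    e ∈ freeEdges h ↔ ¬ e.IsDiag ∧ e ∉ h.map Prod.fst := by
  simp [freeEdges]

theorem card_freeEdges_nil : #(freeEdges ([] : GameHistory n t)) = n.choose 2 := by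
  have := Sym2.card_subtype_not_diag (α := Fin n)
  rw [Fintype.card_subtype, Fintype.card_fin] at this
  simpa [freeEdges] using this

theorem freeEdges_append_singleton (h : GameHistory n t) (e : Sym2 (Fin n)) (c : Fin t) :
    freeEdges (h ++ [(e, c)]) = (freeEdges h).erase e := by
  ext f
  simp only [mem_freeEdges, List.map_append, List.map_singleton, List.mem_append,
    List.mem_singleton, mem_erase]
  tauto

/-- Builder can force a monochromatic matching of one of the target sizes within `k` further legal
moves after the history `h`. -/
def Forces (r : Fin t → ℕ) : ℕ → GameHistory n t → Prop
  | 0, h => HistoryHasMatching n t r h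
  | k + 1, h => HistoryHasMatching n t r h ∨
      ∃ e ∈ freeEdges h, ∀ c, Forces r k (h ++ [(e, c)])

namespace Forces

theorem of_hasMatching {h : GameHistory n t} (hh : HistoryHasMatching n t r h) :
    ∀ k, Forces r k h
  | 0 => hh
  | _ + 1 => .inl hh

theorem succ {k : ℕ} {h : GameHistory n t} (H : Forces r k h) : Forces r (k + 1) h := by
  induction k generalizing h with
  | zero => exact .inl H
  | succ k ih => exact H.imp_right fun ⟨e, he, hc⟩ => ⟨e, he, fun c => ih (hc c)⟩

theorem mono {k l : ℕ} (hkl : k ≤ l) {h : GameHistory n t} (H : Forces r k h) :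
    Forces r l h :=
  Nat.le_induction H (fun _ _ => succ) l hkl

/-- Builder may also query an edge played before: its colour is known, and the move is saved. -/
theorem of_query {k : ℕ} {h : GameHistory n t} {e : Sym2 (Fin n)} (he : ¬ e.IsDiag)
    (H : ∀ h' c, h ⊆ h' → (e, c) ∈ h' → Forces r k h') : Forces r (k + 1) h := by
  by_cases hmem : e ∈ h.map Prod.fst
  · obtain ⟨⟨_, c⟩, hc, rfl⟩ := List.mem_map.1 hmem
    exact (H h c (List.Subset.refl h) hc).succ
  · exact .inr ⟨e, mem_freeEdges.2 ⟨he, hmem⟩, fun c => H _ c (by simp) (by simp)⟩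

theorem hasMatching_of_freeEdges_eq_empty {k : ℕ} {h : GameHistory n t} (H : Forces r k h)
    (hfree : freeEdges h = ∅) : HistoryHasMatching n t r h := by
  cases k with
  | zero => exact H
  | succ k => exact H.resolve_right (by simp [hfree])

end Forces

theorem exists_mem_freeEdges_forall_forces {h : GameHistory n t} (hfree : (freeEdges h).Nonempty) :
    ∃ e ∈ freeEdges h, ∀ k, Forces r (k + 1) h → ∀ c, Forces r k (h ++ [(e, c)]) := by
  classical
  by_cases hh : HistoryHasMatching n t r h
  · obtain ⟨e, he⟩ := hfree
    exact ⟨e, he, fun k _ c => .of_hasMatching (hh.mono (by simp)) k⟩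
  by_cases hforces : ∃ k, Forces r (k + 1) h
  · obtain ⟨e, he, hc⟩ := (Nat.find_spec hforces).resolve_left hh
    exact ⟨e, he, fun k hk c => (hc c).mono (Nat.find_min' hforces hk)⟩
  · obtain ⟨e, he⟩ := hfree
    exact ⟨e, he, fun k hk => absurd ⟨k, hk⟩ hforces⟩

theorem card_freeEdges_gamePlay {B : BuilderStrategy n t} {P : PainterStrategy n t} {k : ℕ}
    (hB : ∀ j < k, B (gamePlay B P j) ∈ freeEdges (gamePlay B P j)) :
    #(freeEdges (gamePlay B P k)) + k = n.choose 2 := by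
  induction k with
  | zero => exact card_freeEdges_nil
  | succ k ih =>
    have hk := ih fun j hj => hB j (by omega)
    have := card_erase_add_one (hB k k.lt_succ_self)
    rw [gamePlay, freeEdges_append_singleton]
    omega

theorem Forces.builderWinsIn [NeZero n] {k : ℕ} (H : Forces (n := n) r k []) :
    BuilderWinsIn n t r (min k (n.choose 2)) := by
  choose! B hfree hforces using
    fun h : GameHistory n t => exists_mem_freeEdges_forall_forces (r := r) (h := h)
  have hlegal (P : PainterStrategy n t) (j : ℕ) (hj : j < n.choose 2) :
      B (gamePlay B P j) ∈ freeEdges (gamePlay B P j) := by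
    induction j using Nat.strong_induction_on with
    | _ j ih =>
      have := card_freeEdges_gamePlay fun i hi => ih i hi (hi.trans hj)
      exact hfree _ (card_pos.1 (by omega))
  have hinv (P : PainterStrategy n t) :
      ∀ j ≤ min k (n.choose 2), Forces r (k - j) (gamePlay B P j) := by
    intro j
    induction j with
    | zero => exact fun _ => H
    | succ j ih =>
      intro hj
      obtain ⟨hjk, hjn⟩ := le_min_iff.1 hj
      have hprev := ih (by omega)
      rw [show k - j = k - (j + 1) + 1 by omega] at hprev
      exact hforces _ ⟨_, hlegal P j hjn⟩ _ hprev _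
  refine ⟨B, fun P j hj => mem_freeEdges.1 (hlegal P j (lt_min_iff.1 hj).2), fun P => ?_⟩
  have hend := hinv P _ le_rfl
  rcases le_total k (n.choose 2) with hk | hk
  · rw [min_eq_left hk] at hend ⊢
    rwa [Nat.sub_self] at hend
  · rw [min_eq_right hk] at hend ⊢
    have := card_freeEdges_gamePlay fun j hj => hlegal P j hj
    exact hend.hasMatching_of_freeEdges_eq_empty (card_eq_zero.1 (by omega))

end Forces

/-! ### Families of colour sets -/

section ColourFamilies

/-- The colour `c` belongs to all colour sets of `𝒞` with at least two elements. When these are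
pairs or the set of all colours, the pairs form a star around `c`. -/
def IsCentre {α : Type*} (c : α) (𝒞 : Finset (Finset α)) : Prop := ∀ C ∈ 𝒞, C.Nontrivial → c ∈ C

theorem IsCentre.mono {α : Type*} {c : α} {𝒞 𝒟 : Finset (Finset α)} (hc : IsCentre c 𝒞)
    (h : 𝒟 ⊆ 𝒞) : IsCentre c 𝒟 :=
  fun C hC => hc C (h hC)

protected theorem IsCentre.insert {α : Type*} [DecidableEq α] {c : α} {𝒞 : Finset (Finset α)}
    {C : Finset α} (hc : IsCentre c 𝒞) (hC : C.Nontrivial → c ∈ C) : IsCentre c (insert C 𝒞) :=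
  forall_mem_insert _ _ _ |>.2 ⟨hC, hc⟩

/-- The colour pair `D` extends the star `𝒞` to a star, or it is disjoint from a pair in `𝒞`. -/
def Attachable {α : Type*} (𝒞 : Finset (Finset α)) (D : Finset α) : Prop :=
  (∃ c ∈ D, IsCentre c 𝒞) ∨ ∃ C ∈ 𝒞, #C = 2 ∧ Disjoint C D

theorem Attachable.mono {α : Type*} {𝒞 𝒟 : Finset (Finset α)} {D : Finset α}
    (hD : Attachable 𝒞 D) (hsub : 𝒟 ⊆ 𝒞) (hpairs : ∀ C ∈ 𝒞, #C = 2 → C ∈ 𝒟) :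
    Attachable 𝒟 D :=
  hD.imp (fun ⟨c, hcD, hc⟩ => ⟨c, hcD, hc.mono hsub⟩)
    fun ⟨C, hC, hcard, hdisj⟩ => ⟨C, hpairs C hC hcard, hcard, hdisj⟩

/-- Whatever colour `q` Painter gives to an edge joining an `i`-edge to a `j`-edge, one of the two
cherries obtained is attachable to `𝒞`. -/
def Joinable {α : Type*} [DecidableEq α] (𝒞 : Finset (Finset α)) (i j : α) : Prop :=
  ∀ q, (i ≠ q ∧ Attachable 𝒞 {i, q}) ∨ (j ≠ q ∧ Attachable 𝒞 {j, q})

theorem IsCentre.joinable {α : Type*} [DecidableEq α] {𝒞 : Finset (Finset α)} {i j : α}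
    (hi : IsCentre i 𝒞) (hij : i ≠ j) : Joinable 𝒞 i j := by
  intro q
  rcases eq_or_ne i q with rfl | hq
  · exact .inr ⟨hij.symm, .inl ⟨i, by simp, hi⟩⟩
  · exact .inl ⟨hq, .inl ⟨i, by simp, hi⟩⟩

theorem card_eq_two_of_nontrivial {α : Type*} [Fintype α] {C : Finset α}
    (hC : #C = 1 ∨ #C = 2 ∨ C = univ) (hnt : C.Nontrivial) {i : α} (hi : i ∉ C) : #C = 2 := by
  have := one_lt_card_iff_nontrivial.2 hnt
  rcases hC with hC | hC | rfl
  · omega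
  · exact hC
  · simp at hi

theorem eq_of_mem_of_card_eq_two {α : Type*} {C : Finset α} (hC : #C = 2) {a b x : α} (ha : a ∈ C)
    (hb : b ∈ C) (hab : a ≠ b) (hx : x ∈ C) : x = a ∨ x = b := by
  classical
  have : {a, b} = C := eq_of_subset_of_card_le (by grind) (by rw [hC, card_pair hab])
  simpa [← this] using hx

section NotJoinable

variable {α : Type*} [Fintype α] [DecidableEq α] {𝒞 : Finset (Finset α)} {c i j : α}

theorem joinable_of_notMem_pair (h𝒞 : ∀ C ∈ 𝒞, #C = 1 ∨ #C = 2 ∨ C = univ)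
    (hc : IsCentre c 𝒞) {C : Finset α} (hC : C ∈ 𝒞) (hcard : #C = 2) (hiC : i ∉ C)
    (hjC : j ∉ C) (hij : i ≠ j) : Joinable 𝒞 i j := by
  intro q
  rcases eq_or_ne q i with rfl | hqi
  · exact .inr ⟨hij.symm, .inr ⟨C, hC, hcard, by simp [hiC, hjC]⟩⟩
  rcases eq_or_ne q j with rfl | hqj
  · exact .inl ⟨hij, .inr ⟨C, hC, hcard, by simp [hiC, hjC]⟩⟩
  by_cases hq : IsCentre q 𝒞
  · exact .inl ⟨hqi.symm, .inl ⟨q, by simp, hq⟩⟩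
  -- A pair `D` avoiding `q` contains `c`, and `c ≠ i, j` as `c ∈ C`, so `D` misses `i` or `j`.
  obtain ⟨D, hD, hDnt, hqD⟩ : ∃ D ∈ 𝒞, D.Nontrivial ∧ q ∉ D := by
    simpa [IsCentre] using hq
  have hDcard : #D = 2 := card_eq_two_of_nontrivial (h𝒞 D hD) hDnt hqD
  have hcC : c ∈ C := hc C hC (one_lt_card_iff_nontrivial.1 (by omega))
  have hcD : c ∈ D := hc D hD hDnt
  by_cases hiD : i ∈ D
  · have hjD : j ∉ D := fun hjD => by
      rcases eq_of_mem_of_card_eq_two hDcard hcD hiD (by grind) hjD with rfl | rfl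
      · exact hjC hcC
      · exact hij rfl
    exact .inr ⟨hqj.symm, .inr ⟨D, hD, hDcard, by simp [hjD, hqD]⟩⟩
  · exact .inl ⟨hqi.symm, .inr ⟨D, hD, hDcard, by simp [hiD, hqD]⟩⟩

theorem eq_or_eq_of_forall_not_joinable (h𝒞 : ∀ C ∈ 𝒞, #C = 1 ∨ #C = 2 ∨ C = univ)
    (hc : IsCentre c 𝒞)
    (hjoin : ∀ i j, i ≠ j → {i} ∈ 𝒞 → {j} ∈ 𝒞 → ¬ Joinable 𝒞 i j) (hi : {i} ∈ 𝒞) (hj : {j} ∈ 𝒞)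
    (hij : i ≠ j) {l : α} (hl : {l} ∈ 𝒞) : l = i ∨ l = j := by
  by_contra! hne
  obtain ⟨hli, hlj⟩ := hne
  have hi_centre : ¬ IsCentre i 𝒞 := fun hi' => hjoin i j hij hi hj (hi'.joinable hij)
  obtain ⟨D, hD, hDnt, hiD⟩ : ∃ D ∈ 𝒞, D.Nontrivial ∧ i ∉ D := by
    simpa [IsCentre] using hi_centre
  have hDcard : #D = 2 := card_eq_two_of_nontrivial (h𝒞 D hD) hDnt hiD
  have hmem : ∀ x, {x} ∈ 𝒞 → x ≠ i → x ∈ D := fun x hx hxi => by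
    by_contra hxD
    exact hjoin i x hxi.symm hi hx (joinable_of_notMem_pair h𝒞 hc hD hDcard hiD hxD hxi.symm)
  rcases eq_of_mem_of_card_eq_two hDcard (hmem j hj hij.symm) (hmem l hl hli) hlj.symm
    (hc D hD hDnt) with rfl | rfl
  · exact hjoin c i hij.symm hj hi (hc.joinable hij.symm)
  · exact hjoin c i hli hl hi (hc.joinable hli)

end NotJoinable

section Weights

variable {𝒞 : Finset (Finset (Fin 4))} {c : Fin 4}

theorem exists_weight_of_two_singletons (h𝒞 : ∀ C ∈ 𝒞, #C = 1 ∨ #C = 2 ∨ C = univ)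
    (hc : IsCentre c 𝒞)
    (hjoin : ∀ i j, i ≠ j → {i} ∈ 𝒞 → {j} ∈ 𝒞 → ¬ Joinable 𝒞 i j) {i j : Fin 4}
    (hi : {i} ∈ 𝒞) (hj : {j} ∈ 𝒞) (hij : i ≠ j) :
    ∃ w : Fin 4 → ℕ, ∑ c, w c = 5 ∧ ∀ C ∈ 𝒞, #C + 1 ≤ ∑ c ∈ C, w c := by
  refine ⟨Pi.single c 1 + Pi.single i 2 + Pi.single j 2, by simp [sum_add_distrib], ?_⟩
  intro C hC
  simp only [Pi.add_apply, sum_add_distrib, sum_pi_single']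
  rcases h𝒞 C hC with hcard | hcard | rfl
  · obtain ⟨l, rfl⟩ := card_eq_one.1 hcard
    rcases eq_or_eq_of_forall_not_joinable h𝒞 hc hjoin hi hj hij hC with rfl | rfl <;>
      simp only [card_singleton, mem_singleton, if_true] <;> omega
  · have hcC : c ∈ C := hc C hC (one_lt_card_iff_nontrivial.1 (by omega))
    have hmeet : i ∈ C ∨ j ∈ C := by
      by_contra! hne
      exact hjoin i j hij hi hj (joinable_of_notMem_pair h𝒞 hc hC hcard hne.1 hne.2 hij)
    rcases hmeet with h | h <;> simp only [hcC, h, if_true] <;> omega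
  · simp

theorem exists_weight_of_singletons_eq (h𝒞 : ∀ C ∈ 𝒞, #C = 1 ∨ #C = 2 ∨ C = univ)
    (hc : IsCentre c 𝒞) {l : Fin 4} (hl : ∀ i, {i} ∈ 𝒞 → i = l) :
    ∃ w : Fin 4 → ℕ, ∑ c, w c = 5 ∧ ∀ C ∈ 𝒞, #C + 1 ≤ ∑ c ∈ C, w c := by
  refine ⟨Pi.single c 3 + Pi.single l 2, by simp [sum_add_distrib], ?_⟩
  intro C hC
  simp only [Pi.add_apply, sum_add_distrib, sum_pi_single']
  rcases h𝒞 C hC with hcard | hcard | rfl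
  · obtain ⟨i, rfl⟩ := card_eq_one.1 hcard
    simp [hl i hC]
  · have hcC : c ∈ C := hc C hC (one_lt_card_iff_nontrivial.1 (by omega))
    simp only [hcC, if_true]
    omega
  · simp

theorem exists_weight_of_forall_not_joinable (h𝒞 : ∀ C ∈ 𝒞, #C = 1 ∨ #C = 2 ∨ C = univ)
    (hc : IsCentre c 𝒞)
    (hjoin : ∀ i j, i ≠ j → {i} ∈ 𝒞 → {j} ∈ 𝒞 → ¬ Joinable 𝒞 i j) :
    ∃ w : Fin 4 → ℕ, ∑ c, w c = 5 ∧ ∀ C ∈ 𝒞, #C + 1 ≤ ∑ c ∈ C, w c := by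
  by_cases htwo : ∃ i j, i ≠ j ∧ {i} ∈ 𝒞 ∧ {j} ∈ 𝒞
  · obtain ⟨i, j, hij, hi, hj⟩ := htwo
    exact exists_weight_of_two_singletons h𝒞 hc hjoin hi hj hij
  obtain ⟨l, hl⟩ : ∃ l, ∀ i, {i} ∈ 𝒞 → i = l := by
    by_cases hone : ∃ l, {l} ∈ 𝒞
    · obtain ⟨l, hl⟩ := hone
      exact ⟨l, fun i hi => by_contra fun hil => htwo ⟨i, l, hil, hi, hl⟩⟩
    · exact ⟨c, fun i hi => absurd ⟨i, hi⟩ hone⟩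
  exact exists_weight_of_singletons_eq h𝒞 hc hl

end Weights

end ColourFamilies

/-! ### Gadgets -/

section Gadgets

variable {n t : ℕ}

/-- A gadget of Builder: a set of vertices together with the set of colours recorded on it. -/
abbrev Gadget (n t : ℕ) : Type := Finset (Fin n) × Finset (Fin t)

/-- Every recorded colour of the gadget `g` occurs on an edge inside `g` in the history `h`. -/
def Carries (h : GameHistory n t) (g : Gadget n t) : Prop :=
  ∀ c ∈ g.2, ∃ e, (e, c) ∈ h ∧ ¬ e.IsDiag ∧ e.toFinset ⊆ g.1

theorem Carries.mono {h h' : GameHistory n t} {g : Gadget n t} (hg : Carries h g) (hsub : h ⊆ h') :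
    Carries h' g := by
  intro c hc
  obtain ⟨e, he, hdiag, hsubset⟩ := hg c hc
  exact ⟨e, hsub he, hdiag, hsubset⟩

theorem exists_isMatchingIn_of_carries {h : GameHistory n t} {G : Finset (Gadget n t)}
    (hG : ∀ g ∈ G, Carries h g) (hdisj : (G : Set (Gadget n t)).PairwiseDisjoint Prod.fst)
    {c : Fin t} (hc : ∀ g ∈ G, c ∈ g.2) :
    ∃ M : Finset (Sym2 (Fin n)), #M = #G ∧ IsMatchingIn M ∧ ∀ e ∈ M, (e, c) ∈ h := by
  rcases G.eq_empty_or_nonempty with rfl | ⟨g₀, hg₀⟩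
  · exact ⟨∅, by simp [IsMatchingIn]⟩
  have : Nonempty (Sym2 (Fin n)) := ⟨(hG g₀ hg₀ c (hc g₀ hg₀)).choose⟩
  choose! f hfh hdiag hsub using fun g hg => hG g hg c (hc g hg)
  have hf : ∀ g ∈ G, ∀ g' ∈ G, g ≠ g' → EdgeDisjoint (f g) (f g') := fun g hg g' hg' hne =>
    edgeDisjoint_iff_disjoint_toFinset.2 ((hdisj hg hg' hne).mono (hsub g hg) (hsub g' hg'))
  have hinj : Set.InjOn f G := by
    intro g hg g' hg' heq
    by_contra hne
    have := hf g hg g' hg' hne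
    rw [← heq] at this
    exact this _ (Sym2.out_fst_mem _) (Sym2.out_fst_mem _)
  refine ⟨G.image f, card_image_of_injOn hinj, ⟨forall_mem_image.2 hdiag, ?_⟩,
    forall_mem_image.2 hfh⟩
  rw [coe_image]
  rintro _ ⟨g, hg, rfl⟩ _ ⟨g', hg', rfl⟩ hne
  exact hf g hg g' hg' fun heq => hne (congrArg f heq)

theorem historyHasMatching_of_weight {h : GameHistory n t} {G : Finset (Gadget n t)}
    (hG : ∀ g ∈ G, Carries h g) (hdisj : (G : Set (Gadget n t)).PairwiseDisjoint Prod.fst)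
    {w s : Fin t → ℕ} (hw : ∀ g ∈ G, #g.1 ≤ ∑ c ∈ g.2, w c)
    (hs : ∑ c, w c * s c < ∑ g ∈ G, #g.1) :
    HistoryHasMatching n t (fun c => s c + 1) h := by
  have hcount : ∑ g ∈ G, #g.1 ≤ ∑ c, w c * #{g ∈ G | c ∈ g.2} := by
    calc ∑ g ∈ G, #g.1 ≤ ∑ g ∈ G, ∑ c ∈ g.2, w c := sum_le_sum hw
      _ = ∑ c, ∑ g ∈ G with c ∈ g.2, w c := sum_comm' (by simp)
      _ = ∑ c, w c * #{g ∈ G | c ∈ g.2} := by simp [mul_comm]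
  obtain ⟨c, -, hc⟩ := exists_lt_of_sum_lt (hs.trans_le hcount)
  obtain ⟨G', hG', hcard⟩ :=
    exists_subset_card_eq (Nat.succ_le_of_lt (Nat.lt_of_mul_lt_mul_left hc))
  have hG'G : G' ⊆ G := hG'.trans (filter_subset _ _)
  obtain ⟨M, hM, hmatch, hMh⟩ := exists_isMatchingIn_of_carries (c := c)
    (fun g hg => hG g (hG'G hg)) (hdisj.subset (coe_subset.2 hG'G))
    fun g hg => (mem_filter.1 (hG' hg)).2
  exact ⟨c, M, hM.trans hcard, hmatch, hMh⟩

/-- The three kinds of gadgets in Builder's strategy. -/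
inductive IsGadget (h : GameHistory n 4) : Gadget n 4 → Prop
  | edge {x y : Fin n} {i : Fin 4} (hxy : x ≠ y) (hi : (s(x, y), i) ∈ h) : IsGadget h ({x, y}, {i})
  | cherry {x u y : Fin n} {i j : Fin 4} (hxu : x ≠ u) (huy : u ≠ y) (hxy : x ≠ y) (hij : i ≠ j)
      (hi : (s(x, u), i) ∈ h) (hj : (s(u, y), j) ∈ h) : IsGadget h ({x, u, y}, {i, j})
  | rainbow {V : Finset (Fin n)} (hV : #V = 5) (hcarries : Carries h (V, univ)) :
      IsGadget h (V, univ)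

namespace IsGadget

variable {h h' : GameHistory n 4} {g g₁ g₂ : Gadget n 4}

theorem mono (hg : IsGadget h g) (hsub : h ⊆ h') : IsGadget h' g := by
  cases hg with
  | edge hxy hi => exact edge hxy (hsub hi)
  | cherry hxu huy hxy hij hi hj => exact cherry hxu huy hxy hij (hsub hi) (hsub hj)
  | rainbow hV hcarries => exact rainbow hV (hcarries.mono hsub)

theorem card_fst (hg : IsGadget h g) : #g.1 = #g.2 + 1 := by
  cases hg with
  | edge hxy _ => simp [hxy]
  | cherry hxu huy hxy hij _ _ =>
    simp [card_pair hij, card_eq_three.2 ⟨_, _, _, hxu, hxy, huy, rfl⟩]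
  | rainbow hV _ => simpa using hV

theorem nonempty_fst (hg : IsGadget h g) : g.1.Nonempty :=
  card_pos.1 (by have := hg.card_fst; omega)

theorem nonempty_snd (hg : IsGadget h g) : g.2.Nonempty := by
  cases hg with
  | edge => simp
  | cherry => simp
  | rainbow => simp

theorem card_snd (hg : IsGadget h g) : #g.2 = 1 ∨ #g.2 = 2 ∨ g.2 = univ := by
  cases hg with
  | edge => simp
  | cherry _ _ _ hij _ _ => exact .inr (.inl (card_pair hij))
  | rainbow => simp

theorem carries (hg : IsGadget h g) : Carries h g := by
  cases hg with
  | @edge x y i hxy hi =>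
    intro c hc
    obtain rfl := mem_singleton.1 hc
    exact ⟨s(x, y), hi, by simpa using hxy, by simp [Sym2.toFinset_mk_eq]⟩
  | @cherry x u y i j hxu huy _ _ hi hj =>
    intro c hc
    rcases mem_insert.1 hc with rfl | hc
    · exact ⟨s(x, u), hi, by simpa using hxu, by grind [Sym2.toFinset_mk_eq]⟩
    · obtain rfl := mem_singleton.1 hc
      exact ⟨s(u, y), hj, by simpa using huy, by grind [Sym2.toFinset_mk_eq]⟩
  | rainbow _ hcarries => exact hcarries

theorem exists_edge (hg : IsGadget h g) {i : Fin 4} (hi : g.2 = {i}) :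
    ∃ x y, x ≠ y ∧ g.1 = {x, y} ∧ (s(x, y), i) ∈ h := by
  cases hg with
  | edge hxy hj =>
    obtain rfl := singleton_injective hi
    exact ⟨_, _, hxy, rfl, hj⟩
  | cherry _ _ _ hij =>
    have := congrArg card hi
    simp [card_pair hij] at this
  | rainbow => simpa using congrArg card hi

/-- The vertex `u` is the middle of the cherry, and `{u, y}` is what remains of it when the leaf at
its `q`-coloured edge is dropped. -/
theorem exists_middle (hg : IsGadget h g) (hcard : #g.2 = 2) :
    ∃ u ∈ g.1, ∀ q ∈ g.2, ∃ y ∈ g.1, ∃ j, u ≠ y ∧ g.2 = {q, j} ∧ (s(u, y), j) ∈ h := by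
  cases hg with
  | edge => simp at hcard
  | @cherry x u y i j hxu huy _ _ hi hj =>
    refine ⟨u, by simp, fun q hq => ?_⟩
    rcases mem_insert.1 hq with rfl | hq
    · exact ⟨y, by simp, j, huy, rfl, hj⟩
    · obtain rfl := mem_singleton.1 hq
      exact ⟨x, by simp, i, hxu.symm, pair_comm _ _, Sym2.eq_swap ▸ hi⟩
  | rainbow => simp at hcard

theorem exists_rainbow (hg₂ : IsGadget h g₂) (hverts : Disjoint g₁.1 g₂.1)
    (hcols : g₁.2 ∪ g₂.2 = univ) (hcard : #g₂.2 = 2) {u v y : Fin n} (hu : u ∈ g₁.1)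
    (hy : y ∈ g₁.1) (huy : u ≠ y) (hv : v ∈ g₂.1) {q j : Fin 4} (hqj : g₁.2 = {q, j})
    (hj : (s(u, y), j) ∈ h) (hq : (s(u, v), q) ∈ h) :
    ∃ V ⊆ g₁.1 ∪ g₂.1, IsGadget h (V, univ) := by
  have huy_sub : {u, y} ⊆ g₁.1 := by simp [insert_subset_iff, hu, hy]
  have huv : u ≠ v := fun huv => disjoint_left.1 hverts hu (huv ▸ hv)
  refine ⟨{u, y} ∪ g₂.1, union_subset_union huy_sub subset_rfl, rainbow ?_ ?_⟩
  · rw [card_union_of_disjoint (hverts.mono_left huy_sub), card_pair huy, hg₂.card_fst, hcard]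
  · intro c _
    have hc : c ∈ g₁.2 ∪ g₂.2 := hcols ▸ mem_univ c
    rw [hqj, mem_union, mem_insert, mem_singleton] at hc
    rcases hc with (rfl | rfl) | hc
    · exact ⟨_, hq, by simpa using huv, by grind [Sym2.toFinset_mk_eq]⟩
    · exact ⟨_, hj, by simpa using huy, by grind [Sym2.toFinset_mk_eq]⟩
    · obtain ⟨e, he, hdiag, hsub⟩ := hg₂.carries c hc
      exact ⟨e, he, hdiag, hsub.trans subset_union_right⟩

theorem exists_query_cherry (hg₁ : IsGadget h g₁) (hg₂ : IsGadget h g₂)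
    (hverts : Disjoint g₁.1 g₂.1) {i j : Fin 4} (hi : g₁.2 = {i}) (hj : g₂.2 = {j}) :
    ∃ e : Sym2 (Fin n), ¬ e.IsDiag ∧ ∀ h' q, h ⊆ h' → (e, q) ∈ h' →
      (i ≠ q → ∃ V ⊆ g₁.1 ∪ g₂.1, IsGadget h' (V, {i, q})) ∧
        (j ≠ q → ∃ V ⊆ g₁.1 ∪ g₂.1, IsGadget h' (V, {j, q})) := by
  obtain ⟨x, y, hxy, h₁, hxyi⟩ := hg₁.exists_edge hi
  obtain ⟨z, w, hzw, h₂, hzwj⟩ := hg₂.exists_edge hj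
  have hne : ∀ a ∈ g₁.1, ∀ b ∈ g₂.1, a ≠ b := disjoint_iff_ne.1 hverts
  simp only [h₁, h₂] at hne ⊢
  refine ⟨s(y, z), by simpa using hne y (by simp) z (by simp), fun h' q hsub hq => ⟨?_, ?_⟩⟩
  · exact fun hiq => ⟨{x, y, z}, by grind, cherry hxy (hne y (by simp) z (by simp))
      (hne x (by simp) z (by simp)) hiq (hsub hxyi) hq⟩
  · exact fun hjq => ⟨{w, z, y}, by grind, cherry hzw.symm (hne y (by simp) z (by simp)).symm
      (hne y (by simp) w (by simp)).symm hjq (Sym2.eq_swap ▸ hsub hzwj) (Sym2.eq_swap ▸ hq)⟩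

theorem exists_query_rainbow (hg₁ : IsGadget h g₁) (hg₂ : IsGadget h g₂)
    (hverts : Disjoint g₁.1 g₂.1) (hcard₁ : #g₁.2 = 2) (hcard₂ : #g₂.2 = 2)
    (hcols : Disjoint g₁.2 g₂.2) :
    ∃ e : Sym2 (Fin n), ¬ e.IsDiag ∧ ∀ h' q, h ⊆ h' → (e, q) ∈ h' →
      ∃ V ⊆ g₁.1 ∪ g₂.1, IsGadget h' (V, univ) := by
  have huniv : g₁.2 ∪ g₂.2 = univ := eq_univ_of_card _ <| by
    rw [card_union_of_disjoint hcols, hcard₁, hcard₂, Fintype.card_fin]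
  obtain ⟨u, hu, hu_leaf⟩ := hg₁.exists_middle hcard₁
  obtain ⟨v, hv, hv_leaf⟩ := hg₂.exists_middle hcard₂
  refine ⟨s(u, v), by simpa using disjoint_iff_ne.1 hverts u hu v hv, fun h' q hsub hq => ?_⟩
  rcases mem_union.1 (huniv ▸ mem_univ q : q ∈ g₁.2 ∪ g₂.2) with hq₁ | hq₂
  · obtain ⟨y, hy, j, huy, hqj, hj⟩ := hu_leaf q hq₁
    exact (hg₂.mono hsub).exists_rainbow hverts huniv hcard₂ hu hy huy hv hqj (hsub hj) hq
  · obtain ⟨y, hy, j, hvy, hqj, hj⟩ := hv_leaf q hq₂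
    rw [union_comm]
    exact (hg₁.mono hsub).exists_rainbow hverts.symm (union_comm g₁.2 g₂.2 ▸ huniv) hcard₁ hv hy
      hvy hu hqj (hsub hj) (Sym2.eq_swap ▸ hq)

theorem notMem_of_forall_disjoint {G : Finset (Gadget n 4)} (hg : IsGadget h g)
    (hdisj : ∀ g' ∈ G, Disjoint g.1 g'.1) : g ∉ G :=
  fun hmem => hg.nonempty_fst.ne_empty (disjoint_self_iff_empty _ |>.1 (hdisj g hmem))

end IsGadget

/-- The number of moves in which Builder constructs the gadgets in `G`. The subtraction is truncated
only for gadgets without colours, which do not occur. -/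
def buildCost (G : Finset (Gadget n 4)) : ℕ := ∑ g ∈ G, (2 * #g.2 - 1)

theorem buildCost_insert {G : Finset (Gadget n 4)} {g : Gadget n 4} (hg : g ∉ G) :
    buildCost (insert g G) = 2 * #g.2 - 1 + buildCost G :=
  sum_insert hg

/-- The gadgets in `G` are vertex-disjoint and occur in the history `h`. -/
structure IsPacking (h : GameHistory n 4) (G : Finset (Gadget n 4)) : Prop where
  isGadget : ∀ g ∈ G, IsGadget h g
  pairwiseDisjoint : (G : Set (Gadget n 4)).PairwiseDisjoint Prod.fst

namespace IsPacking

variable {h h' : GameHistory n 4} {G G' : Finset (Gadget n 4)} {g g₁ g₂ : Gadget n 4}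

theorem mono (hG : IsPacking h G) (hsub : h ⊆ h') : IsPacking h' G :=
  ⟨fun g hg => (hG.isGadget g hg).mono hsub, hG.pairwiseDisjoint⟩

theorem subset (hG : IsPacking h G) (hsub : G' ⊆ G) : IsPacking h G' :=
  ⟨fun g hg => hG.isGadget g (hsub hg), hG.pairwiseDisjoint.subset (coe_subset.2 hsub)⟩

protected theorem insert (hG : IsPacking h G) (hg : IsGadget h g)
    (hdisj : ∀ g' ∈ G, Disjoint g.1 g'.1) :
    IsPacking h (insert g G) where
  isGadget := forall_mem_insert _ _ _ |>.2 ⟨hg, hG.isGadget⟩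
  pairwiseDisjoint := by
    rw [coe_insert]
    exact hG.pairwiseDisjoint.insert fun g' hg' _ => hdisj g' hg'

theorem sum_card_fst (hG : IsPacking h G) : ∑ g ∈ G, #g.1 = ∑ g ∈ G, #g.2 + #G := by
  rw [sum_congr rfl fun g hg => (hG.isGadget g hg).card_fst, sum_add_distrib, card_eq_sum_ones]

theorem buildCost_add_card (hG : IsPacking h G) : buildCost G + #G = 2 * ∑ g ∈ G, #g.2 := by
  rw [buildCost, card_eq_sum_ones, ← sum_add_distrib, mul_sum]
  refine sum_congr rfl fun g hg => ?_
  have := (hG.isGadget g hg).nonempty_snd.card_pos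
  omega

theorem buildCost_le (hG : IsPacking h G) {s : ℕ} (hn : n ≤ 5 * s + 2) :
    buildCost G ≤ 7 * s + 1 := by
  have hverts : ∑ g ∈ G, #g.2 + #G ≤ n := by
    rw [← hG.sum_card_fst, ← card_biUnion hG.pairwiseDisjoint]
    simpa using card_le_univ (G.biUnion Prod.fst)
  have hcols : ∑ g ∈ G, #g.2 ≤ #G * 4 :=
    sum_le_card_nsmul _ _ _ fun g _ => by simpa using card_le_univ g.2
  have := hG.buildCost_add_card
  rcases le_or_gt #G s with hs | hs <;> omega

theorem exists_pair_disjoint (hG : IsPacking h G) (hn : ∑ g ∈ G, #g.1 + 2 ≤ n) :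
    ∃ x y, x ≠ y ∧ ∀ g ∈ G, Disjoint {x, y} g.1 := by
  have hfree : 1 < #(G.biUnion Prod.fst)ᶜ := by
    rw [card_compl, card_biUnion hG.pairwiseDisjoint, Fintype.card_fin]
    omega
  obtain ⟨x, hx, y, hy, hxy⟩ := one_lt_card.1 hfree
  simp only [mem_compl, mem_biUnion, not_exists, not_and] at hx hy
  exact ⟨x, y, hxy, fun g hg => by simp [hx g hg, hy g hg]⟩

theorem disjoint_sdiff_pair (hG : IsPacking h G) (hg₁ : g₁ ∈ G) (hg₂ : g₂ ∈ G)
    {V : Finset (Fin n)} (hV : V ⊆ g₁.1 ∪ g₂.1) : ∀ g' ∈ G \ {g₁, g₂}, Disjoint V g'.1 := by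
  intro g' hg'
  simp only [mem_sdiff, mem_insert, mem_singleton, not_or] at hg'
  exact (disjoint_union_left.2 ⟨hG.pairwiseDisjoint hg₁ hg'.1 (Ne.symm hg'.2.1),
    hG.pairwiseDisjoint hg₂ hg'.1 (Ne.symm hg'.2.2)⟩).mono_left hV

theorem merge (hG : IsPacking h G) (hg₁ : g₁ ∈ G) (hg₂ : g₂ ∈ G) (hg : IsGadget h g)
    (hV : g.1 ⊆ g₁.1 ∪ g₂.1) : IsPacking h (insert g (G \ {g₁, g₂})) :=
  (hG.subset sdiff_subset).insert hg (hG.disjoint_sdiff_pair hg₁ hg₂ hV)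

theorem buildCost_merge (hG : IsPacking h G) (hg₁ : g₁ ∈ G) (hg₂ : g₂ ∈ G) (hne : g₁ ≠ g₂)
    (hg : IsGadget h g) (hV : g.1 ⊆ g₁.1 ∪ g₂.1) (hcard : #g.2 = #g₁.2 + #g₂.2) :
    buildCost (insert g (G \ {g₁, g₂})) = buildCost G + 1 := by
  have hsub : {g₁, g₂} ⊆ G := insert_subset hg₁ (singleton_subset_iff.2 hg₂)
  have hsplit := sum_sdiff (f := fun g => 2 * #g.2 - 1) hsub
  have := (hG.isGadget g₁ hg₁).nonempty_snd.card_pos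
  have := (hG.isGadget g₂ hg₂).nonempty_snd.card_pos
  rw [sum_pair hne] at hsplit
  rw [buildCost_insert (hg.notMem_of_forall_disjoint (hG.disjoint_sdiff_pair hg₁ hg₂ hV))]
  simp only [buildCost]
  omega

end IsPacking

end Gadgets

/-! ### Builder's strategy -/

section Builder

variable {n : ℕ} {h : GameHistory n 4} {G : Finset (Gadget n 4)} {g g₁ g₂ : Gadget n 4}

/-- The packings that Builder maintains: the colour pairs of the cherries form a star, possibly
after the removal of two cherries that can be joined into a rainbow gadget. -/
def Promising (G : Finset (Gadget n 4)) : Prop :=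
  (∃ c, IsCentre c (G.image Prod.snd)) ∨
    ∃ g₁ ∈ G, ∃ g₂ ∈ G, #g₁.2 = 2 ∧ #g₂.2 = 2 ∧ Disjoint g₁.2 g₂.2 ∧
      ∃ c, IsCentre c ((G \ {g₁, g₂}).image Prod.snd)

theorem IsCentre.promising_insert {c : Fin 4} (hc : IsCentre c (G.image Prod.snd))
    (hg : g.2.Nontrivial → c ∈ g.2) : Promising (insert g G) :=
  .inl ⟨c, by rw [image_insert]; exact hc.insert hg⟩

theorem IsCentre.promising_insert_of_attachable {c : Fin 4} (hc : IsCentre c (G.image Prod.snd))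
    (hcard : #g.2 = 2) (hg : Attachable (G.image Prod.snd) g.2) : Promising (insert g G) := by
  rcases hg with ⟨d, hd, hd_centre⟩ | ⟨C, hC, hCcard, hdisj⟩
  · exact hd_centre.promising_insert fun _ => hd
  · obtain ⟨g', hg', rfl⟩ := mem_image.1 hC
    refine .inr ⟨g', mem_insert_of_mem hg', g, mem_insert_self g G, hCcard, hcard, hdisj, c, ?_⟩
    exact hc.mono (image_subset_image (by grind))

theorem image_snd_sdiff_pair_subset : (G \ {g₁, g₂}).image Prod.snd ⊆ G.image Prod.snd :=
  image_subset_image sdiff_subset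

theorem Attachable.sdiff_pair {D : Finset (Fin 4)} (hD : Attachable (G.image Prod.snd) D)
    (hg₁ : #g₁.2 = 1) (hg₂ : #g₂.2 = 1) : Attachable ((G \ {g₁, g₂}).image Prod.snd) D := by
  refine hD.mono image_snd_sdiff_pair_subset fun C hC hcard => ?_
  obtain ⟨g, hg, rfl⟩ := mem_image.1 hC
  exact mem_image_of_mem _ (mem_sdiff.2 ⟨hg, by grind⟩)

theorem IsPacking.historyHasMatching_of_forall_not_joinable {s : ℕ} {c : Fin 4}
    (hG : IsPacking h G) (hc : IsCentre c (G.image Prod.snd))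
    (hjoin : ∀ i j, i ≠ j → {i} ∈ G.image Prod.snd → {j} ∈ G.image Prod.snd →
      ¬ Joinable (G.image Prod.snd) i j)
    (hs : 5 * s < ∑ g ∈ G, #g.1) : HistoryHasMatching n 4 (fun _ => s + 1) h := by
  obtain ⟨w, hw, hwG⟩ := exists_weight_of_forall_not_joinable
    (forall_mem_image.2 fun g hg => (hG.isGadget g hg).card_snd) hc hjoin
  refine historyHasMatching_of_weight (w := w) (s := fun _ => s)
    (fun g hg => (hG.isGadget g hg).carries) hG.pairwiseDisjoint (fun g hg => ?_) ?_
  · rw [(hG.isGadget g hg).card_fst]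
    exact hwG _ (mem_image_of_mem _ hg)
  · rwa [← sum_mul, hw]

/-- The claim of the induction on the number `k` of moves that are left to Builder: every promising
packing is completed to a win when at least `7 * s + 2 - k` moves were spent on it. -/
def PromisingForces (n s k : ℕ) : Prop :=
  ∀ (h : GameHistory n 4) (G : Finset (Gadget n 4)), IsPacking h G → Promising G →
    7 * s + 2 ≤ buildCost G + k → Forces (fun _ => s + 1) k h

namespace PromisingForces

variable {s k : ℕ}

theorem forces_of_merge (H : PromisingForces n s k) (hG : IsPacking h G) (hg₁ : g₁ ∈ G)
    (hg₂ : g₂ ∈ G) (hne : g₁ ≠ g₂) (hk : 7 * s + 2 ≤ buildCost G + (k + 1)) {e : Sym2 (Fin n)}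
    (he : ¬ e.IsDiag)
    (hmerge : ∀ h' q, h ⊆ h' → (e, q) ∈ h' → ∃ g, IsGadget h' g ∧ g.1 ⊆ g₁.1 ∪ g₂.1 ∧
      #g.2 = #g₁.2 + #g₂.2 ∧ Promising (insert g (G \ {g₁, g₂}))) :
    Forces (fun _ => s + 1) (k + 1) h := by
  refine .of_query he fun h' q hsub hq => ?_
  obtain ⟨g, hg, hV, hcard, hprom⟩ := hmerge h' q hsub hq
  have hG' := hG.mono hsub
  refine H h' _ (hG'.merge hg₁ hg₂ hg hV) hprom ?_
  rw [hG'.buildCost_merge hg₁ hg₂ hne hg hV hcard]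
  omega

theorem forces_of_disjoint_pairs (H : PromisingForces n s k) (hG : IsPacking h G) (hg₁ : g₁ ∈ G)
    (hg₂ : g₂ ∈ G) (hcard₁ : #g₁.2 = 2) (hcard₂ : #g₂.2 = 2) (hcols : Disjoint g₁.2 g₂.2)
    {c : Fin 4} (hc : IsCentre c ((G \ {g₁, g₂}).image Prod.snd))
    (hk : 7 * s + 2 ≤ buildCost G + (k + 1)) : Forces (fun _ => s + 1) (k + 1) h := by
  have hne : g₁ ≠ g₂ := by
    rintro rfl
    exact (hG.isGadget g₁ hg₁).nonempty_snd.ne_empty (disjoint_self_iff_empty _ |>.1 hcols)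
  obtain ⟨e, he, hrainbow⟩ := (hG.isGadget g₁ hg₁).exists_query_rainbow (hG.isGadget g₂ hg₂)
    (hG.pairwiseDisjoint hg₁ hg₂ hne) hcard₁ hcard₂ hcols
  refine H.forces_of_merge hG hg₁ hg₂ hne hk he fun h' q hsub hq => ?_
  obtain ⟨V, hV, hgad⟩ := hrainbow h' q hsub hq
  exact ⟨(V, univ), hgad, hV, by simp [hcard₁, hcard₂], hc.promising_insert fun _ => mem_univ c⟩

theorem forces_of_joinable (H : PromisingForces n s k) (hG : IsPacking h G) {c i j : Fin 4}
    (hc : IsCentre c (G.image Prod.snd)) (hij : i ≠ j) (hi : {i} ∈ G.image Prod.snd)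
    (hj : {j} ∈ G.image Prod.snd) (hjoin : Joinable (G.image Prod.snd) i j)
    (hk : 7 * s + 2 ≤ buildCost G + (k + 1)) : Forces (fun _ => s + 1) (k + 1) h := by
  obtain ⟨g₁, hg₁, hi⟩ := mem_image.1 hi
  obtain ⟨g₂, hg₂, hj⟩ := mem_image.1 hj
  have hne : g₁ ≠ g₂ := by
    rintro rfl
    exact hij (singleton_injective (hi.symm.trans hj))
  have hcard₁ : #g₁.2 = 1 := by simp [hi]
  have hcard₂ : #g₂.2 = 1 := by simp [hj]
  obtain ⟨e, he, hcherry⟩ := (hG.isGadget g₁ hg₁).exists_query_cherry (hG.isGadget g₂ hg₂)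
    (hG.pairwiseDisjoint hg₁ hg₂ hne) hi hj
  have hrest := hc.mono (image_snd_sdiff_pair_subset (g₁ := g₁) (g₂ := g₂))
  refine H.forces_of_merge hG hg₁ hg₂ hne hk he fun h' q hsub hq => ?_
  obtain ⟨p, hpq, hatt, V, hV, hgad⟩ : ∃ p, p ≠ q ∧ Attachable (G.image Prod.snd) {p, q} ∧
      ∃ V ⊆ g₁.1 ∪ g₂.1, IsGadget h' (V, {p, q}) := by
    rcases hjoin q with ⟨hiq, hatt⟩ | ⟨hjq, hatt⟩
    · exact ⟨i, hiq, hatt, (hcherry h' q hsub hq).1 hiq⟩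
    · exact ⟨j, hjq, hatt, (hcherry h' q hsub hq).2 hjq⟩
  have hcard : #{p, q} = 2 := card_pair hpq
  exact ⟨(V, {p, q}), hgad, hV, by rw [hcard, hcard₁, hcard₂],
    hrest.promising_insert_of_attachable hcard (hatt.sdiff_pair hcard₁ hcard₂)⟩

theorem forces_of_unused_pair (H : PromisingForces n s k) (hG : IsPacking h G) {c : Fin 4}
    (hc : IsCentre c (G.image Prod.snd)) {x y : Fin n} (hxy : x ≠ y)
    (hunused : ∀ g ∈ G, Disjoint {x, y} g.1) (hk : 7 * s + 2 ≤ buildCost G + (k + 1)) :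
    Forces (fun _ => s + 1) (k + 1) h := by
  refine .of_query (e := s(x, y)) (by simpa using hxy) fun h' q hsub hq => ?_
  have hg : IsGadget h' ({x, y}, {q}) := .edge hxy hq
  refine H h' _ ((hG.mono hsub).insert hg hunused) (hc.promising_insert (by simp)) ?_
  rw [buildCost_insert (hg.notMem_of_forall_disjoint hunused), card_singleton]
  omega

end PromisingForces

theorem promisingForces (s k : ℕ) : PromisingForces (5 * s + 2) s k := by
  induction k with
  | zero =>
    intro h G hG _ hk
    have := hG.buildCost_le le_rfl
    omega
  | succ k ih =>
    rintro h G hG (⟨c, hc⟩ | ⟨g₁, hg₁, g₂, hg₂, hcard₁, hcard₂, hcols, c, hc⟩) hk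
    · by_cases hjoin : ∀ i j, i ≠ j → {i} ∈ G.image Prod.snd → {j} ∈ G.image Prod.snd →
          ¬ Joinable (G.image Prod.snd) i j
      · by_cases hroom : ∑ g ∈ G, #g.1 + 2 ≤ 5 * s + 2
        · obtain ⟨x, y, hxy, hunused⟩ := hG.exists_pair_disjoint hroom
          exact ih.forces_of_unused_pair hG hc hxy hunused hk
        · exact .of_hasMatching
            (hG.historyHasMatching_of_forall_not_joinable hc hjoin (by omega)) _
      · push Not at hjoin
        obtain ⟨i, j, hij, hi, hj, hjoin⟩ := hjoin
        exact ih.forces_of_joinable hG hc hij hi hj hjoin hk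
    · exact ih.forces_of_disjoint_pairs hG hg₁ hg₂ hcard₁ hcard₂ hcols hc hk

theorem builderWinsIn_four_colours (s : ℕ) :
    BuilderWinsIn (5 * s + 2) 4 (fun _ => s + 1) (min (7 * s + 2) ((5 * s + 2).choose 2)) :=
  (promisingForces s (7 * s + 2) [] ∅ ⟨by simp, by simp⟩ (.inl ⟨0, by simp [IsCentre]⟩)
    (by simp)).builderWinsIn

end Builder

/-- For `r ≥ 1` and `n₄ = 5r − 3 = R₄(rK₂)`, we have `7r − 6 ≤ R̃₄(rK₂; n₄) ≤ 7r − 5`. -/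
theorem restrictedOnlineRamsey_four_colours (r : ℕ) (hr : 1 ≤ r) :
    7 * r - 6 ≤ restrictedOnlineRamsey (5 * r - 3) 4 (fun _ => r) ∧
      restrictedOnlineRamsey (5 * r - 3) 4 (fun _ => r) ≤ 7 * r - 5 := by
  obtain ⟨s, rfl⟩ := Nat.exists_eq_add_of_le' hr
  have hn : 5 * (s + 1) - 3 = 5 * s + 2 := by omega
  have hupper := builderWinsIn_four_colours s
  rw [hn]
  constructor
  · refine le_csInf ⟨_, hupper⟩ fun k hk => ?_
    have hlower : 3 * (∑ _i : Fin 4, s + 1) ≤ 5 * s + 2 + k := hk.three_mul_sum_add_one_le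
    rw [sum_const, card_univ, Fintype.card_fin, smul_eq_mul] at hlower
    omega
  · calc restrictedOnlineRamsey (5 * s + 2) 4 (fun _ => s + 1)
        ≤ min (7 * s + 2) ((5 * s + 2).choose 2) := Nat.sInf_le hupper
      _ ≤ 7 * (s + 1) - 5 := by omega
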